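/- In a nonlinear model (p_k ≠ k/m for some 0 ≤ k ≤ m) with X_0 > 0 and Y_0 > 0, if z ∈ Z_P ∩ (0,1) is an unstable zero, i.e., there exists ε > 0 such that P < 0 on (z−ε, z) and P > 0 on (z, z+ε), then P(lim_{n→∞} a_n = z) = 0. -/

import Mathlib

open MeasureTheory ProbabilityTheory Filter Set

noncomputable section

/-- The polynomial `P(z) = (1/2) ∑_{k=0}^m C(m,k) z^k (1-z)^{m-k} (p_k - k/m)`. -/
def polyP (m : ℕ) (p : ℕ → ℝ) (z : ℝ) : ℝ :=
  (1 / 2) * ∑ k ∈ Finset.range (m + 1),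
    (m.choose k : ℝ) * z ^ k * (1 - z) ^ (m - k) * (p k - (k : ℝ) / m)

/-- The zero set `Z_P = {z ∈ [0,1] : P(z) = 0}`. -/
def zeroSetP (m : ℕ) (p : ℕ → ℝ) : Set ℝ :=
  {z ∈ Set.Icc (0 : ℝ) 1 | polyP m p z = 0}

/-- The two-type preferential attachment process with `m` edges per new node and type
adoption parameters `p 0, …, p m`, defined on a probability space `(Ω, μ)` with filtration
`F`.  `A n` is the number of red nodes and `X n` the sum of the degrees of red nodes at time
`n`; the transition probabilities given `F n` are those of the model: a number `k` of red
neighbours is drawn from the `Binomial(m, x_n)` distribution, and then the new node is red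
with probability `p k` (adding `1` to the red nodes and `k + m` to the red degrees) and blue
with probability `1 - p k` (adding `k` to the red degrees). -/
structure PAProcess (Ω : Type) [MeasurableSpace Ω] where
  μ : Measure Ω
  isProb : IsProbabilityMeasure μ
  m : ℕ
  hm : 1 ≤ m
  p : ℕ → ℝ
  hp : ∀ k ≤ m, p k ∈ Set.Icc (0 : ℝ) 1
  A : ℕ → Ω → ℕ
  X : ℕ → Ω → ℕ
  F : Filtration ℕ ‹MeasurableSpace Ω›
  A0 : ℕ
  B0 : ℕ
  X0 : ℕ
  Y0 : ℕ
  hA0 : ∀ ω, A 0 ω = A0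
  hX0 : ∀ ω, X 0 ω = X0
  adaptedA : ∀ n, Measurable[F n] (A n)
  adaptedX : ∀ n, Measurable[F n] (X n)
  hXle : ∀ n ω, X n ω ≤ X0 + Y0 + 2 * m * n
  step_red : ∀ n, ∀ k ≤ m,
    μ[Set.indicator {ω | A (n + 1) ω = A n ω + 1 ∧ X (n + 1) ω = X n ω + k + m}
        (fun _ => (1 : ℝ)) | F n]
      =ᵐ[μ] fun ω => (m.choose k : ℝ) *
        ((X n ω : ℝ) / ((X0 : ℝ) + Y0 + 2 * m * n)) ^ k *
        (1 - (X n ω : ℝ) / ((X0 : ℝ) + Y0 + 2 * m * n)) ^ (m - k) * p k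
  step_blue : ∀ n, ∀ k ≤ m,
    μ[Set.indicator {ω | A (n + 1) ω = A n ω ∧ X (n + 1) ω = X n ω + k}
        (fun _ => (1 : ℝ)) | F n]
      =ᵐ[μ] fun ω => (m.choose k : ℝ) *
        ((X n ω : ℝ) / ((X0 : ℝ) + Y0 + 2 * m * n)) ^ k *
        (1 - (X n ω : ℝ) / ((X0 : ℝ) + Y0 + 2 * m * n)) ^ (m - k) * (1 - p k)

namespace PAProcess

variable {Ω : Type} [MeasurableSpace Ω] (P : PAProcess Ω)

/-- Total degree `S_n = S_0 + 2mn`. -/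
def S (n : ℕ) : ℕ := P.X0 + P.Y0 + 2 * P.m * n

/-- Normalized red degree `x_n = X_n / S_n`. -/
def x (n : ℕ) (ω : Ω) : ℝ := (P.X n ω : ℝ) / (P.S n : ℝ)

/-- Normalized red node count `a_n = A_n / (A_0 + B_0 + n)`. -/
def a (n : ℕ) (ω : Ω) : ℝ := (P.A n ω : ℝ) / ((P.A0 : ℝ) + P.B0 + n)

/-- The polynomial `P` of the process. -/
def poly : ℝ → ℝ := polyP P.m P.p

/-- The zero set `Z_P` of the process. -/
def Zp : Set ℝ := zeroSetP P.m P.p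

end PAProcess

/-- Deterministic stochastic-approximation lemma. -/
lemma sa_tendsto_zero (w γ r : ℕ → ℝ) (c : ℝ) (hc : 0 < c) (N : ℕ)
    (hγ : ∀ n ≥ N, c / (n + 1) ≤ γ n ∧ γ n ≤ 1)
    (hw : ∀ n ≥ N, |w (n + 1)| ≤ (1 - γ n) * |w n| + γ n * r n)
    (hr : Tendsto r atTop (nhds 0)) : Tendsto w atTop (nhds 0) := by
  rw [Metric.tendsto_atTop]
  intro δ hδ
  obtain ⟨N1, hN1⟩ := (hr.eventually_le_const (show (0:ℝ) < δ / 2 by positivity)).exists_forall_of_atTop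
  set N2 := max N N1 with hN2
  set q : ℕ → ℝ := fun n => max (|w n| - δ / 2) 0 with hq
  have hq0 : ∀ n, 0 ≤ q n := fun n => le_max_right _ _
  have hstep : ∀ n ≥ N2, q (n + 1) ≤ (1 - γ n) * q n := by
    intro n hn
    have h1 := hγ n (le_trans (le_max_left _ _) hn)
    have h2 := hw n (le_trans (le_max_left _ _) hn)
    have h3 := hN1 n (le_trans (le_max_right _ _) hn)
    have h0 : 0 ≤ c / ((n:ℝ) + 1) := by positivity
    have h4 : |w n| - δ / 2 ≤ q n := le_max_left _ _
    refine max_le ?_ (mul_nonneg (by linarith) (hq0 n))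
    nlinarith [mul_le_mul_of_nonneg_left h3 (show 0 ≤ γ n by linarith),
      mul_le_mul_of_nonneg_left h4 (show 0 ≤ 1 - γ n by linarith)]
  have hexp : ∀ k, q (N2 + k) ≤ q N2 *
      Real.exp (-c * (∑ i ∈ Finset.range (N2 + k), 1 / ((i:ℝ) + 1) - ∑ i ∈ Finset.range N2, 1 / ((i:ℝ) + 1))) := by
    intro k
    induction k with
    | zero => simp
    | succ k ih =>
      have h1 := hγ (N2 + k) (le_trans (le_max_left _ _) (Nat.le_add_right _ _))
      have h2 := hstep (N2 + k) (Nat.le_add_right _ _)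
      have h3 : 1 - γ (N2 + k) ≤ Real.exp (-c * (1 / (((N2 + k : ℕ):ℝ) + 1))) := by
        have := Real.add_one_le_exp (-c * (1 / (((N2 + k : ℕ):ℝ) + 1)))
        have h5 : -c * (1 / (((N2 + k : ℕ):ℝ) + 1)) = - (c / (((N2 + k : ℕ):ℝ) + 1)) := by ring
        linarith [h1.1]
      rw [← add_assoc, Finset.sum_range_succ]
      calc q (N2 + k + 1) ≤ (1 - γ (N2 + k)) * q (N2 + k) := h2
        _ ≤ Real.exp (-c * (1 / (((N2 + k : ℕ):ℝ) + 1))) * q (N2 + k) :=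
          mul_le_mul_of_nonneg_right h3 (hq0 _)
        _ ≤ Real.exp (-c * (1 / (((N2 + k : ℕ):ℝ) + 1))) * _ :=
          mul_le_mul_of_nonneg_left ih (Real.exp_pos _).le
        _ = _ := by
          rw [mul_left_comm, ← Real.exp_add]
          congr 2
          ring
  have hlim : Tendsto (fun k => q N2 *
      Real.exp (-c * (∑ i ∈ Finset.range (N2 + k), 1 / ((i:ℝ) + 1) - ∑ i ∈ Finset.range N2, 1 / ((i:ℝ) + 1)))) atTop (nhds 0) := by
    rw [← mul_zero (q N2)]
    refine Tendsto.const_mul _ (Real.tendsto_exp_atBot.comp ?_)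
    have h1 : Tendsto (fun k => ∑ i ∈ Finset.range (N2 + k), 1 / ((i:ℝ) + 1)) atTop atTop := by
      have := Real.tendsto_sum_range_one_div_nat_succ_atTop.comp (tendsto_add_atTop_nat N2)
      refine this.congr (fun k => ?_)
      simp [add_comm]
    have h2 := tendsto_atTop_add_const_right atTop (-∑ i ∈ Finset.range N2, 1 / ((i:ℝ) + 1)) h1
    have h3 := h2.const_mul_atTop_of_neg (show -c < 0 by linarith)
    simpa [sub_eq_add_neg] using h3
  obtain ⟨K, hK⟩ := (hlim.eventually_lt_const (show (0:ℝ) < δ / 2 by positivity)).exists_forall_of_atTop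
  refine ⟨N2 + K, fun n hn => ?_⟩
  obtain ⟨k, rfl⟩ := Nat.exists_eq_add_of_le (le_trans (Nat.le_add_right _ _) hn)
  have h1 := hK k (by omega)
  have h2 := hexp k
  have h3 : |w (N2 + k)| - δ / 2 ≤ q (N2 + k) := le_max_left _ _
  rw [Real.dist_eq, sub_zero]
  linarith

def bb (m j : ℕ) (x : ℝ) : ℝ := (m.choose j : ℝ) * x ^ j * (1 - x) ^ (m - j)

def QQ (m : ℕ) (p : ℕ → ℝ) (x : ℝ) (R L : ℕ → ℝ) : ℝ :=
  ∑ j ∈ Finset.range (m + 1), (bb m j x * p j * R j + bb m j x * (1 - p j) * L j)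

lemma bb_nonneg {m j : ℕ} {x : ℝ} (hx : x ∈ Set.Icc (0:ℝ) 1) : 0 ≤ bb m j x := by
  have := hx.1
  have : 0 ≤ 1 - x := by linarith [hx.2]
  unfold bb; positivity

lemma bb_sum (m : ℕ) (x : ℝ) : ∑ j ∈ Finset.range (m + 1), bb m j x = 1 := by
  have h := add_pow x (1 - x) m
  rw [add_sub_cancel, one_pow] at h
  rw [h]
  refine Finset.sum_congr rfl (fun j _ => ?_)
  unfold bb; ring

lemma bb_eq (m j : ℕ) (x : ℝ) : bb m j x = (bernsteinPolynomial ℝ m j).eval x := by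
  simp [bb, bernsteinPolynomial]

lemma bb_sum_mul (m : ℕ) (x : ℝ) : ∑ j ∈ Finset.range (m + 1), bb m j x * j = m * x := by
  have h := congrArg (Polynomial.eval x) (bernsteinPolynomial.sum_smul ℝ m)
  rw [Polynomial.eval_finset_sum] at h
  simp only [bb_eq]
  simp only [Polynomial.eval_smul, nsmul_eq_mul, Polynomial.eval_mul, Polynomial.eval_natCast, Polynomial.eval_X] at h
  rw [← h]
  refine Finset.sum_congr rfl (fun j _ => ?_)
  ring

lemma QQ_const (m : ℕ) (p : ℕ → ℝ) (x a : ℝ) : QQ m p x (fun _ => a) (fun _ => a) = a := by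
  unfold QQ
  have : ∀ j, bb m j x * p j * a + bb m j x * (1 - p j) * a = bb m j x * a := fun j => by ring
  simp only [this]
  rw [← Finset.sum_mul, bb_sum, one_mul]

lemma QQ_id (m : ℕ) (p : ℕ → ℝ) (x : ℝ) : QQ m p x (fun j => j) (fun j => j) = m * x := by
  unfold QQ
  have : ∀ j : ℕ, bb m j x * p j * j + bb m j x * (1 - p j) * j = bb m j x * j := fun j => by ring
  simp only [this]
  rw [bb_sum_mul]

def vv (m : ℕ) (p : ℕ → ℝ) (x : ℝ) : ℝ :=
  QQ m p x (fun j => ((j:ℝ) + m - 2 * m * x) ^ 2) (fun j => ((j:ℝ) - 2 * m * x) ^ 2)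

lemma QQ_drift (m : ℕ) (hm : 1 ≤ m) (p : ℕ → ℝ) (x : ℝ) :
    QQ m p x (fun j => (j:ℝ) + m - 2 * m * x) (fun j => (j:ℝ) - 2 * m * x) = 2 * m * polyP m p x := by
  have hm' : (m:ℝ) ≠ 0 := by positivity
  have h1 : 2 * m * polyP m p x = ∑ j ∈ Finset.range (m + 1), (bb m j x * p j * m - bb m j x * j) := by
    unfold polyP
    rw [← mul_assoc, Finset.mul_sum]
    refine Finset.sum_congr rfl (fun j _ => ?_)
    unfold bb
    field_simp
  rw [h1, Finset.sum_sub_distrib, bb_sum_mul]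
  have h2 : QQ m p x (fun j => (j:ℝ) + m - 2 * m * x) (fun j => (j:ℝ) - 2 * m * x)
    = ∑ j ∈ Finset.range (m + 1), (bb m j x * p j * m + bb m j x * j - bb m j x * (2 * m * x)) := by
    unfold QQ
    refine Finset.sum_congr rfl (fun j _ => ?_)
    ring
  rw [h2, Finset.sum_sub_distrib, Finset.sum_add_distrib, bb_sum_mul, ← Finset.sum_mul (f := fun j => bb m j x), bb_sum]
  ring

lemma QQ_mono (m : ℕ) (p : ℕ → ℝ) (hp : ∀ k ≤ m, p k ∈ Set.Icc (0 : ℝ) 1) (x : ℝ)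
    (hx : x ∈ Set.Icc (0:ℝ) 1) (R L R' L' : ℕ → ℝ)
    (hR : ∀ j ≤ m, R j ≤ R' j) (hL : ∀ j ≤ m, L j ≤ L' j) : QQ m p x R L ≤ QQ m p x R' L' := by
  unfold QQ
  refine Finset.sum_le_sum (fun j hj => ?_)
  have hj' : j ≤ m := by simpa [Nat.lt_succ_iff] using hj
  have h := hp j hj'
  have hb : 0 ≤ bb m j x := bb_nonneg hx
  refine add_le_add (mul_le_mul_of_nonneg_left (hR j hj') (mul_nonneg hb h.1))
    (mul_le_mul_of_nonneg_left (hL j hj') (mul_nonneg hb (by linarith [h.2])))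

/-- quadratic majorant bound -/
lemma QQ_quad (m : ℕ) (hm : 1 ≤ m) (p : ℕ → ℝ) (hp : ∀ k ≤ m, p k ∈ Set.Icc (0 : ℝ) 1) (x : ℝ)
    (hx : x ∈ Set.Icc (0:ℝ) 1) (φ : ℝ → ℝ) (a b c : ℝ)
    (h : ∀ d ∈ Set.Icc (0:ℝ) (2 * m), φ d ≤ a + b * (d - 2 * m * x) + c * (d - 2 * m * x) ^ 2) :
    QQ m p x (fun j => φ (j + m)) (fun j => φ j) ≤ a + b * (2 * m * polyP m p x) + c * vv m p x := by
  have h1 := QQ_mono m p hp x hx (fun j => φ (j + m)) (fun j => φ j)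
    (fun j => a + b * ((j + m : ℝ) - 2 * m * x) + c * ((j + m : ℝ) - 2 * m * x) ^ 2)
    (fun j => a + b * ((j : ℝ) - 2 * m * x) + c * ((j : ℝ) - 2 * m * x) ^ 2)
    (fun j hj => h _ ⟨by positivity, by
      have : (j:ℝ) ≤ m := by exact_mod_cast hj
      linarith⟩)
    (fun j hj => h _ ⟨by positivity, by
      have : (j:ℝ) ≤ m := by exact_mod_cast hj
      have : (0:ℝ) ≤ m := by positivity
      linarith⟩)
  refine h1.trans (le_of_eq ?_)
  rw [← QQ_drift m hm, vv]
  conv_rhs => rw [← QQ_const m p x a]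
  unfold QQ
  rw [Finset.mul_sum, Finset.mul_sum, ← Finset.sum_add_distrib, ← Finset.sum_add_distrib]
  refine Finset.sum_congr rfl (fun j _ => ?_)
  ring

lemma vv_le (m : ℕ) (p : ℕ → ℝ) (hp : ∀ k ≤ m, p k ∈ Set.Icc (0 : ℝ) 1) (x : ℝ)
    (hx : x ∈ Set.Icc (0:ℝ) 1) : vv m p x ≤ 4 * m ^ 2 := by
  rw [← QQ_const m p x (4 * (m:ℝ) ^ 2)]
  have hm0 : (0:ℝ) ≤ m := by positivity
  have h1 : 0 ≤ m * x := mul_nonneg hm0 hx.1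
  have h2 : m * x ≤ m := mul_le_of_le_one_right hm0 hx.2
  refine QQ_mono m p hp x hx _ _ _ _ (fun j hj => ?_) (fun j hj => ?_) <;>
  · have hj' : (j:ℝ) ≤ m := by exact_mod_cast hj
    have hj0 : (0:ℝ) ≤ j := by positivity
    have h3 : (4:ℝ) * m ^ 2 = (2 * m) ^ 2 := by ring
    rw [h3]
    refine sq_le_sq' (by linarith) (by linarith)

lemma vv_continuous (m : ℕ) (p : ℕ → ℝ) : Continuous (vv m p) := by
  unfold vv QQ bb
  fun_prop

lemma vv_pos (m : ℕ) (hm : 1 ≤ m) (p : ℕ → ℝ) (hp : ∀ k ≤ m, p k ∈ Set.Icc (0 : ℝ) 1) (z : ℝ)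
    (hz : z ∈ Set.Ioo (0:ℝ) 1) (ε : ℝ) (hε : 0 < ε)
    (hpos : ∀ y ∈ Set.Ioo z (z + ε), 0 < polyP m p y) : 0 < vv m p z := by
  by_contra hcon
  have hm1 : (1:ℝ) ≤ m := by exact_mod_cast hm
  have hterm : ∀ j ∈ Finset.range (m + 1), 0 ≤ bb m j z * p j * ((j:ℝ) + m - 2 * m * z) ^ 2
      + bb m j z * (1 - p j) * ((j:ℝ) - 2 * m * z) ^ 2 := by
    intro j hj
    have hj' : j ≤ m := by simpa [Nat.lt_succ_iff] using hj
    have h := hp j hj'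
    have hb : 0 ≤ bb m j z := bb_nonneg ⟨hz.1.le, hz.2.le⟩
    have h0 := h.1
    have h2 : 0 ≤ 1 - p j := by linarith [h.2]
    positivity
  have hsum : vv m p z = 0 := le_antisymm (not_lt.1 hcon) (Finset.sum_nonneg hterm)
  have hall := (Finset.sum_eq_zero_iff_of_nonneg hterm).1 hsum
  have key : ∀ j ≤ m, p j * ((j:ℝ) + m - 2 * m * z) ^ 2 = 0 ∧ (1 - p j) * ((j:ℝ) - 2 * m * z) ^ 2 = 0 := by
    intro j hj
    have h := hp j hj
    have h1 := hall j (by simpa [Nat.lt_succ_iff] using hj)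
    have hb : 0 < bb m j z := by
      unfold bb
      have := hz.1
      have : 0 < 1 - z := by linarith [hz.2]
      have : 0 < m.choose j := Nat.choose_pos hj
      positivity
    have h0 := h.1
    have h2 : 0 ≤ 1 - p j := by linarith [h.2]
    have h3 : 0 ≤ p j * ((j:ℝ) + m - 2 * m * z) ^ 2 := by positivity
    have h4 : 0 ≤ (1 - p j) * ((j:ℝ) - 2 * m * z) ^ 2 := by positivity
    have h5 : bb m j z * (p j * ((j:ℝ) + m - 2 * m * z) ^ 2 + (1 - p j) * ((j:ℝ) - 2 * m * z) ^ 2) = 0 := by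
      rw [← h1]; ring
    have h6 := (mul_eq_zero.1 h5).resolve_left hb.ne'
    exact ⟨by linarith, by linarith⟩
  have hz0 := hz.1
  have hz1 := hz.2
  have k0 := key 0 (by omega)
  have km := key m le_rfl
  have hp0 : p 0 = 1 := by
    have h := k0.2
    have h' : ((0:ℕ):ℝ) - 2 * m * z ≠ 0 := by
      have : 0 < (m:ℝ) * z := by positivity
      push_cast; intro h; linarith
    have := (mul_eq_zero.1 h).resolve_right (pow_ne_zero 2 h')
    linarith
  have hzhalf : z = 1 / 2 := by
    have h := k0.1
    rw [hp0, one_mul] at h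
    have h2 := pow_eq_zero_iff (two_ne_zero) |>.1 h
    push_cast at h2
    have : (m:ℝ) * (1 - 2 * z) = 0 := by linarith
    have := (mul_eq_zero.1 this).resolve_left (by positivity)
    linarith
  have hpm : p m = 0 := by
    have h := km.1
    have h' : (m:ℝ) + m - 2 * m * z ≠ 0 := by
      rw [hzhalf]; intro h; linarith
    exact (mul_eq_zero.1 h).resolve_right (pow_ne_zero 2 h')
  rcases Nat.lt_or_ge 1 m with h2 | h2
  · have k1 := key 1 hm
    rw [hzhalf] at k1
    have hm2 : (2:ℝ) ≤ m := by exact_mod_cast h2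
    have ha : p 1 = 0 := by
      refine (mul_eq_zero.1 k1.1).resolve_right (pow_ne_zero 2 ?_)
      push_cast; intro h; linarith
    have hb := k1.2
    rw [ha] at hb
    refine pow_ne_zero 2 ?_ ((mul_eq_zero.1 hb).resolve_left (by norm_num))
    push_cast; intro h; linarith
  · have hm' : m = 1 := le_antisymm h2 hm
    subst hm'
    have h := hpos (z + ε / 2) ⟨by linarith, by linarith⟩
    simp [polyP, Finset.sum_range_succ, hp0, hpm, hzhalf] at h
    linarith
namespace PAProcess

variable {Ω : Type} [MeasurableSpace Ω] (P : PAProcess Ω)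

def redE (n k : ℕ) : Set Ω := {ω | P.A (n + 1) ω = P.A n ω + 1 ∧ P.X (n + 1) ω = P.X n ω + k + P.m}
def bluE (n k : ℕ) : Set Ω := {ω | P.A (n + 1) ω = P.A n ω ∧ P.X (n + 1) ω = P.X n ω + k}

lemma S_cast (n : ℕ) : (P.S n : ℝ) = (P.X0 : ℝ) + P.Y0 + 2 * P.m * n := by
  simp [S]

lemma x_mem (n : ℕ) (ω : Ω) : P.x n ω ∈ Set.Icc (0:ℝ) 1 := by
  refine ⟨by unfold x; positivity, ?_⟩
  unfold x
  refine div_le_one_of_le₀ ?_ (by positivity)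
  exact_mod_cast P.hXle n ω

lemma measA (n : ℕ) : Measurable (P.A n) := (P.adaptedA n).mono (P.F.le n) le_rfl
lemma measX (n : ℕ) : Measurable (P.X n) := (P.adaptedX n).mono (P.F.le n) le_rfl

lemma x_measF (n : ℕ) : Measurable[P.F n] (P.x n) := by
  have h : Measurable (fun k : ℕ => (k:ℝ) / (P.S n : ℝ)) := measurable_from_top
  exact h.comp (P.adaptedX n)

lemma x_meas (n : ℕ) : Measurable (P.x n) := (P.x_measF n).mono (P.F.le n) le_rfl

lemma meas_redE (n k : ℕ) : MeasurableSet (P.redE n k) := by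
  have h1 := P.measA n
  have h2 := P.measX n
  have h3 := P.measA (n+1)
  have h4 := P.measX (n+1)
  exact (measurableSet_eq_fun h3 (h1.add_const 1)).inter (measurableSet_eq_fun h4 ((h2.add_const k).add_const _))

lemma meas_bluE (n k : ℕ) : MeasurableSet (P.bluE n k) := by
  have h1 := P.measA n
  have h2 := P.measX n
  have h3 := P.measA (n+1)
  have h4 := P.measX (n+1)
  exact (measurableSet_eq_fun h3 h1).inter (measurableSet_eq_fun h4 (h2.add_const k))

def stepSum (n : ℕ) (R L : ℕ → Ω → ℝ) (ω : Ω) : ℝ :=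
  ∑ j ∈ Finset.range (P.m + 1), (R j ω * (P.redE n j).indicator (fun _ => (1:ℝ)) ω
    + L j ω * (P.bluE n j).indicator (fun _ => (1:ℝ)) ω)

lemma stepSum_red (n : ℕ) (R L : ℕ → Ω → ℝ) (ω : Ω) (j : ℕ) (hj : j ≤ P.m) (h : ω ∈ P.redE n j) :
    P.stepSum n R L ω = R j ω := by
  have hA := h.1
  have hX := h.2
  unfold stepSum
  rw [Finset.sum_eq_single j]
  · have : ω ∉ P.bluE n j := fun h' => by have := h'.1; omega
    simp [h, this]
  · intro i _ hij
    have h1 : ω ∉ P.bluE n i := fun h' => by have := h'.1; omega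
    have h2 : ω ∉ P.redE n i := fun h' => by have := h'.2; omega
    simp [h1, h2]
  · intro h'; simp [Nat.lt_succ_iff, hj] at h'

lemma stepSum_blu (n : ℕ) (R L : ℕ → Ω → ℝ) (ω : Ω) (j : ℕ) (hj : j ≤ P.m) (h : ω ∈ P.bluE n j) :
    P.stepSum n R L ω = L j ω := by
  have hA := h.1
  have hX := h.2
  unfold stepSum
  rw [Finset.sum_eq_single j]
  · have : ω ∉ P.redE n j := fun h' => by have := h'.1; omega
    simp [h, this]
  · intro i _ hij
    have h1 : ω ∉ P.redE n i := fun h' => by have := h'.1; omega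
    have h2 : ω ∉ P.bluE n i := fun h' => by have := h'.2; omega
    simp [h1, h2]
  · intro h'; simp [Nat.lt_succ_iff, hj] at h'

lemma stepSum_none (n : ℕ) (R L : ℕ → Ω → ℝ) (ω : Ω)
    (h : ¬ ∃ j ≤ P.m, ω ∈ P.redE n j ∨ ω ∈ P.bluE n j) : P.stepSum n R L ω = 0 := by
  push Not at h
  unfold stepSum
  refine Finset.sum_eq_zero (fun j hj => ?_)
  have := h j (by simpa [Nat.lt_succ_iff] using hj)
  simp [this.1, this.2]

lemma condExp_stepSum (n : ℕ) (R L : ℕ → Ω → ℝ) (C : ℝ)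
    (hR : ∀ j, StronglyMeasurable[P.F n] (R j)) (hL : ∀ j, StronglyMeasurable[P.F n] (L j))
    (hRC : ∀ j ≤ P.m, ∀ ω, |R j ω| ≤ C) (hLC : ∀ j ≤ P.m, ∀ ω, |L j ω| ≤ C) :
    Integrable (P.stepSum n R L) P.μ ∧
    P.μ[P.stepSum n R L | P.F n] =ᵐ[P.μ]
      fun ω => QQ P.m P.p (P.x n ω) (fun j => R j ω) (fun j => L j ω) := by
  haveI := P.isProb
  have hi1 : ∀ j, Integrable ((P.redE n j).indicator (fun _ => (1:ℝ))) P.μ := fun j =>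
    (integrable_const _).indicator (P.meas_redE n j)
  have hi2 : ∀ j, Integrable ((P.bluE n j).indicator (fun _ => (1:ℝ))) P.μ := fun j =>
    (integrable_const _).indicator (P.meas_bluE n j)
  have hi3 : ∀ j ≤ P.m, Integrable (R j * (P.redE n j).indicator (fun _ => (1:ℝ))) P.μ := fun j hj =>
    (hi1 j).bdd_mul (c := C) ((hR j).mono (P.F.le n)).aestronglyMeasurable (ae_of_all _ (fun ω => hRC j hj ω))
  have hi4 : ∀ j ≤ P.m, Integrable (L j * (P.bluE n j).indicator (fun _ => (1:ℝ))) P.μ := fun j hj =>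
    (hi2 j).bdd_mul (c := C) ((hL j).mono (P.F.le n)).aestronglyMeasurable (ae_of_all _ (fun ω => hLC j hj ω))
  have heq : P.stepSum n R L = ∑ j ∈ Finset.range (P.m + 1), (R j * (P.redE n j).indicator (fun _ => (1:ℝ))
    + L j * (P.bluE n j).indicator (fun _ => (1:ℝ))) := by
    ext ω
    simp [stepSum, Finset.sum_apply]
  have hint : ∀ j ∈ Finset.range (P.m + 1), Integrable (R j * (P.redE n j).indicator (fun _ => (1:ℝ))
    + L j * (P.bluE n j).indicator (fun _ => (1:ℝ))) P.μ := fun j hj => by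
    have hj' : j ≤ P.m := by simpa [Nat.lt_succ_iff] using hj
    exact (hi3 j hj').add (hi4 j hj')
  rw [heq]
  refine ⟨integrable_finsetSum' _ hint, ?_⟩
  refine (condExp_finset_sum hint _).trans ?_
  have hj : ∀ j ∈ Finset.range (P.m + 1), P.μ[R j * (P.redE n j).indicator (fun _ => (1:ℝ))
    + L j * (P.bluE n j).indicator (fun _ => (1:ℝ)) | P.F n] =ᵐ[P.μ] fun ω =>
      bb P.m j (P.x n ω) * P.p j * R j ω + bb P.m j (P.x n ω) * (1 - P.p j) * L j ω := by
    intro j hj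
    have hj' : j ≤ P.m := by simpa [Nat.lt_succ_iff] using hj
    have e1 := condExp_mul_of_stronglyMeasurable_left (μ := P.μ) (hR j) (hi3 j hj') (hi1 j)
    have e2 := condExp_mul_of_stronglyMeasurable_left (μ := P.μ) (hL j) (hi4 j hj') (hi2 j)
    filter_upwards [condExp_add (hi3 j hj') (hi4 j hj') (P.F n), e1, e2, P.step_red n j hj', P.step_blue n j hj']
      with ω h1 h2 h3 h4 h5
    rw [h1, Pi.add_apply, h2, h3, Pi.mul_apply, Pi.mul_apply]
    unfold redE bluE
    rw [h4, h5]
    unfold x bb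
    rw [S_cast]
    ring
  have hall := (ae_ball_iff (Finset.range (P.m + 1)).countable_toSet).2 hj
  filter_upwards [hall] with ω hω
  rw [Finset.sum_apply]
  exact Finset.sum_congr rfl hω

lemma ae_step (n : ℕ) : ∀ᵐ ω ∂P.μ, ∃ j ≤ P.m, ω ∈ P.redE n j ∨ ω ∈ P.bluE n j := by
  haveI := P.isProb
  obtain ⟨hi, hc⟩ := P.condExp_stepSum n (fun _ _ => 1) (fun _ _ => 1) 1
    (fun _ => stronglyMeasurable_const) (fun _ => stronglyMeasurable_const) (by simp) (by simp)
  have h1 : ∫ ω, P.stepSum n (fun _ _ => 1) (fun _ _ => 1) ω ∂P.μ = 1 := by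
    rw [← integral_condExp (P.F.le n), integral_congr_ae hc]
    simp [QQ_const]
  have hle : ∀ ω, 0 ≤ 1 - P.stepSum n (fun _ _ => 1) (fun _ _ => 1) ω := by
    intro ω
    by_cases h : ∃ j ≤ P.m, ω ∈ P.redE n j ∨ ω ∈ P.bluE n j
    · obtain ⟨j, hj, h | h⟩ := h
      · rw [P.stepSum_red n _ _ ω j hj h]; simp
      · rw [P.stepSum_blu n _ _ ω j hj h]; simp
    · rw [P.stepSum_none n _ _ ω h]; simp
  have h2 : ∫ ω, (1 - P.stepSum n (fun _ _ => 1) (fun _ _ => 1) ω) ∂P.μ = 0 := by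
    rw [integral_sub (integrable_const _) hi, h1]; simp
  have h3 := (integral_eq_zero_iff_of_nonneg hle ((integrable_const _).sub hi)).1 h2
  filter_upwards [h3] with ω hω
  by_contra h
  rw [P.stepSum_none n _ _ ω h] at hω
  simp at hω

lemma condExp_step (n : ℕ) (R L : ℕ → Ω → ℝ) (C : ℝ)
    (hR : ∀ j, StronglyMeasurable[P.F n] (R j)) (hL : ∀ j, StronglyMeasurable[P.F n] (L j))
    (hRC : ∀ j ≤ P.m, ∀ ω, |R j ω| ≤ C) (hLC : ∀ j ≤ P.m, ∀ ω, |L j ω| ≤ C) (H : Ω → ℝ)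
    (hHR : ∀ ω, ∀ j ≤ P.m, ω ∈ P.redE n j → H ω = R j ω)
    (hHL : ∀ ω, ∀ j ≤ P.m, ω ∈ P.bluE n j → H ω = L j ω) :
    Integrable H P.μ ∧ P.μ[H | P.F n] =ᵐ[P.μ]
      fun ω => QQ P.m P.p (P.x n ω) (fun j => R j ω) (fun j => L j ω) := by
  obtain ⟨hi, hc⟩ := P.condExp_stepSum n R L C hR hL hRC hLC
  have he : P.stepSum n R L =ᵐ[P.μ] H := by
    filter_upwards [P.ae_step n] with ω hω
    obtain ⟨j, hj, h | h⟩ := hω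
    · rw [P.stepSum_red n _ _ ω j hj h, hHR ω j hj h]
    · rw [P.stepSum_blu n _ _ ω j hj h, hHL ω j hj h]
  exact ⟨hi.congr he, (condExp_congr_ae he.symm).trans hc⟩

/-- One-step inequality on an `F n`-measurable set, for functions of `(x_n, ΔX)`. -/
lemma step_le (n : ℕ) (g : ℝ → ℝ) (hg0 : ∀ y, 0 ≤ g y) (C : ℝ) (hg : ∀ y, g y ≤ C) (B : Set Ω)
    (hB : MeasurableSet[P.F n] B) (f : Ω → ℝ) (hf : Integrable f P.μ)
    (hgf : ∀ ω ∈ B, QQ P.m P.p (P.x n ω)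
      (fun j => g (((P.S n : ℝ) * P.x n ω + (j + P.m)) / P.S (n + 1)))
      (fun j => g (((P.S n : ℝ) * P.x n ω + j) / P.S (n + 1))) ≤ f ω) (hS : 0 < P.S n) :
    Integrable (fun ω => g (P.x (n + 1) ω)) P.μ ∧
    ∫ ω in B, g (P.x (n + 1) ω) ∂P.μ ≤ ∫ ω in B, f ω ∂P.μ := by
  haveI := P.isProb
  have hSx : ∀ ω, (P.S n : ℝ) * P.x n ω = P.X n ω := fun ω => by
    unfold x
    have : (P.S n : ℝ) ≠ 0 := by positivity
    field_simp
  have hb : ∀ y, |g y| ≤ C := fun y => by rw [abs_of_nonneg (hg0 y)]; exact hg y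
  obtain ⟨hi, hc⟩ := P.condExp_step n
    (fun j ω => g (((P.S n : ℝ) * P.x n ω + (j + P.m)) / P.S (n + 1)))
    (fun j ω => g (((P.S n : ℝ) * P.x n ω + j) / P.S (n + 1))) C
    (fun j => by
      have h : Measurable (fun k : ℕ => g (((k:ℝ) + (j + P.m)) / P.S (n + 1))) := measurable_from_top
      simp only [hSx]
      exact (h.comp (P.adaptedX n)).stronglyMeasurable)
    (fun j => by
      have h : Measurable (fun k : ℕ => g (((k:ℝ) + j) / P.S (n + 1))) := measurable_from_top
      simp only [hSx]
      exact (h.comp (P.adaptedX n)).stronglyMeasurable)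
    (fun j _ ω => hb _) (fun j _ ω => hb _)
    (fun ω => g (P.x (n + 1) ω))
    (fun ω j _ h => by
      simp only [hSx]
      unfold x
      rw [h.2]; push_cast; rw [add_assoc])
    (fun ω j _ h => by
      simp only [hSx]
      unfold x
      rw [h.2]; push_cast; rfl)
  refine ⟨hi, ?_⟩
  rw [← setIntegral_condExp (P.F.le n) hi hB]
  refine setIntegral_mono_on_ae integrable_condExp.integrableOn hf.integrableOn (P.F.le n _ hB) ?_
  filter_upwards [hc] with ω hω hωB
  rw [hω]
  exact hgf ω hωB

end PAProcess
lemma three_sq (a b c : ℝ) : (a + b + c) ^ 2 ≤ 3 * (a ^ 2 + b ^ 2 + c ^ 2) := by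
  nlinarith [sq_nonneg (a - b), sq_nonneg (a - c), sq_nonneg (b - c)]

set_option maxHeartbeats 1000000 in
lemma V_ineq (m : ℕ) (hm : 1 ≤ m) (p : ℕ → ℝ) (hp : ∀ k ≤ m, p k ∈ Set.Icc (0 : ℝ) 1) (x z : ℝ)
    (hx : x ∈ Set.Icc (0:ℝ) 1) (hz : z ∈ Set.Ioo (0:ℝ) 1) (T T' l σ : ℝ) (hT : 0 < T)
    (hT' : T' = T + 2 * m) (hl : 0 < l) (hlm : l * (30 * m) ≤ 1) (hσ : 96 * l * m ^ 4 ≤ σ * T')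
    (hv : σ ≤ vv m p x) (hd : 0 ≤ (x - z) * polyP m p x) :
    QQ m p x (fun j => Real.exp (-l * T' * ((T * x + (j + m)) / T' - z) ^ 2))
      (fun j => Real.exp (-l * T' * ((T * x + j) / T' - z) ^ 2)) ≤
      (1 - l * σ / (2 * T')) * Real.exp (-l * T * (x - z) ^ 2) := by
  have hm1 : (1:ℝ) ≤ m := by exact_mod_cast hm
  have hT'0 : 0 < T' := by rw [hT']; positivity
  set M : ℝ := (m:ℝ) with hM
  set y := x - z with hy
  set E0 := Real.exp (-l * T * y ^ 2) with hE0
  have hE0p : 0 < E0 := Real.exp_pos _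
  have hy1 : |y| ≤ 1 := by rw [abs_le]; constructor <;> linarith [hx.1, hx.2, hz.1, hz.2]
  have hy2 : y ^ 2 ≤ 1 := (sq_le_one_iff_abs_le_one y).2 hy1
  have hy20 : 0 ≤ y ^ 2 := sq_nonneg y
  have hmain := QQ_quad m hm p hp x hx (fun d => Real.exp (-l * T' * ((T * x + d) / T' - z) ^ 2))
    (E0 * (1 - 2 * l * M * y ^ 2 + l ^ 2 * (60 * M ^ 2 * y ^ 2 + 48 * M ^ 4 / T' ^ 2)))
    (E0 * (-2 * l * y)) (E0 * (-l / T')) (by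
      intro d hd
      set θ := d - 2 * m * x with hθ
      have hθ1 : |θ| ≤ 2 * M := by
        have h1 : 0 ≤ M * x := mul_nonneg (by linarith) hx.1
        have h2 : M * x ≤ M := mul_le_of_le_one_right (by linarith) hx.2
        rw [abs_le]; constructor <;> linarith [hd.1, hd.2]
      have hθ2 : θ ^ 2 ≤ 4 * M ^ 2 := by
        have := sq_le_sq' (abs_le.1 hθ1).1 (abs_le.1 hθ1).2
        linarith
      have hθ20 : 0 ≤ θ ^ 2 := sq_nonneg _
      set w := 2 * M * y ^ 2 + 2 * y * θ + θ ^ 2 / T' with hw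
      have e1 : -l * T' * ((T * x + d) / T' - z) ^ 2 = -l * T * y ^ 2 + (-l * w) := by
        have : (T * x + d) / T' - z = y + θ / T' := by
          rw [hy, hθ, hT']; field_simp; ring
        rw [this, hw]
        have hTT : T = T' - 2 * M := by rw [hT']; ring
        rw [hTT]
        field_simp
        ring
      have hq : θ ^ 2 / T' ≤ 2 * M := by
        rw [div_le_iff₀ hT'0, hT']
        nlinarith
      have hq0 : 0 ≤ θ ^ 2 / T' := by positivity
      have hyt : |y * θ| ≤ 2 * M := by
        rw [abs_mul]
        nlinarith [abs_nonneg y, abs_nonneg θ]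
      have hyt' := abs_le.1 hyt
      have hwabs : |w| ≤ 8 * M := by
        rw [abs_le]
        constructor
        · nlinarith
        · nlinarith
      have hlw : |-l * w| ≤ 1 := by
        rw [abs_mul, abs_neg, abs_of_pos hl]
        nlinarith
      have hexp : Real.exp (-l * w) ≤ 1 + (-l * w) + (-l * w) ^ 2 := by
        have := (abs_le.1 (Real.abs_exp_sub_one_sub_id_le hlw)).2
        linarith
      have hw2 : w ^ 2 ≤ 60 * M ^ 2 * y ^ 2 + 48 * M ^ 4 / T' ^ 2 := by
        have h3 : w ^ 2 ≤ 3 * ((2 * M * y ^ 2) ^ 2 + (2 * y * θ) ^ 2 + (θ ^ 2 / T') ^ 2) := by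
          exact three_sq _ _ _
        have h4 : (2 * M * y ^ 2) ^ 2 ≤ 4 * M ^ 2 * y ^ 2 := by
          have : (2 * M * y ^ 2) ^ 2 = 4 * M ^ 2 * y ^ 2 * y ^ 2 := by ring
          rw [this]
          exact mul_le_of_le_one_right (by positivity) hy2
        have h5 : (2 * y * θ) ^ 2 ≤ 16 * M ^ 2 * y ^ 2 := by
          have : (2 * y * θ) ^ 2 = 4 * y ^ 2 * θ ^ 2 := by ring
          rw [this]
          have := mul_le_mul_of_nonneg_left hθ2 (show 0 ≤ 4 * y ^ 2 by positivity)
          linarith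
        have h6 : (θ ^ 2 / T') ^ 2 ≤ 16 * M ^ 4 / T' ^ 2 := by
          rw [div_pow]
          refine div_le_div_of_nonneg_right ?_ (by positivity)
          calc (θ ^ 2) ^ 2 ≤ (4 * M ^ 2) ^ 2 := pow_le_pow_left₀ hθ20 hθ2 2
            _ = 16 * M ^ 4 := by ring
        have h7 : 48 * M ^ 4 / T' ^ 2 = 3 * (16 * M ^ 4 / T' ^ 2) := by ring
        rw [h7]
        linarith
      rw [e1, Real.exp_add]
      have h8 : Real.exp (-l * w) ≤ 1 - l * w + l ^ 2 * (60 * M ^ 2 * y ^ 2 + 48 * M ^ 4 / T' ^ 2) := by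
        have := mul_le_mul_of_nonneg_left hw2 (sq_nonneg l)
        have e3 : (-l * w) ^ 2 = l ^ 2 * w ^ 2 := by ring
        rw [e3] at hexp
        linarith
      have h9 := mul_le_mul_of_nonneg_left h8 hE0p.le
      refine h9.trans (le_of_eq ?_)
      rw [hw]
      ring)
  refine hmain.trans ?_
  rw [mul_comm (1 - l * σ / (2 * T'))]
  have h10 : l * σ / T' ≤ l / T' * vv m p x := by
    have := mul_le_mul_of_nonneg_left hv (show 0 ≤ l / T' by positivity)
    calc l * σ / T' = l / T' * σ := by ring
      _ ≤ _ := this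
  have h11 : l ^ 2 * (48 * M ^ 4 / T' ^ 2) ≤ l * σ / (2 * T') := by
    have e : l ^ 2 * (48 * M ^ 4 / T' ^ 2) = (l / (2 * T' ^ 2)) * (96 * l * M ^ 4) := by ring
    have e' : l * σ / (2 * T') = (l / (2 * T' ^ 2)) * (σ * T') := by field_simp
    rw [e, e']
    exact mul_le_mul_of_nonneg_left hσ (by positivity)
  have h12 : l ^ 2 * (60 * M ^ 2 * y ^ 2) ≤ 2 * l * M * y ^ 2 := by
    have := mul_le_mul_of_nonneg_left hlm (show 0 ≤ 2 * l * M * y ^ 2 by positivity)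
    nlinarith
  have h13 : 0 ≤ 2 * l * y * (2 * M * polyP m p x) := by
    have := mul_nonneg (show 0 ≤ 4 * l * M by positivity) hd
    nlinarith
  have h14 : l * σ / T' = 2 * (l * σ / (2 * T')) := by field_simp
  have h15 : (1 - 2 * l * M * y ^ 2 + l ^ 2 * (60 * M ^ 2 * y ^ 2 + 48 * M ^ 4 / T' ^ 2))
     + (-2 * l * y) * (2 * M * polyP m p x) + (-l / T') * vv m p x ≤ 1 - l * σ / (2 * T') := by
    have e : (-l / T') * vv m p x = - (l / T' * vv m p x) := by ring
    rw [e, mul_add]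
    linarith
  have := mul_le_mul_of_nonneg_left h15 hE0p.le
  linarith

lemma W_ineq (m : ℕ) (hm : 1 ≤ m) (p : ℕ → ℝ) (hp : ∀ k ≤ m, p k ∈ Set.Icc (0 : ℝ) 1) (x z : ℝ)
    (hx : x ∈ Set.Icc (0:ℝ) 1) (T T' r s : ℝ) (hT : 0 < T)
    (hT' : T' = T + 2 * m) (hs : s ^ 2 = 1) (hsy : s * (x - z) = |x - z|)
    (hd : 0 ≤ s * polyP m p x) :
    QQ m p x (fun j => (max (r - |(T * x + (j + m)) / T' - z|) 0) ^ 2)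
      (fun j => (max (r - |(T * x + j) / T' - z|) 0) ^ 2) ≤
      (max (r - |x - z|) 0) ^ 2 + 4 * m ^ 2 / T' ^ 2 := by
  have hm1 : (1:ℝ) ≤ m := by exact_mod_cast hm
  have hT'0 : 0 < T' := by rw [hT']; positivity
  set a0 := max (r - |x - z|) 0 with ha0
  have ha00 : 0 ≤ a0 := le_max_right _ _
  have hmain := QQ_quad m hm p hp x hx (fun d => (max (r - |(T * x + d) / T' - z|) 0) ^ 2)
    (a0 ^ 2) (-2 * a0 * s / T') (1 / T' ^ 2) (by
      intro d hd
      set η := (d - 2 * m * x) / T' with hη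
      have e : (T * x + d) / T' - z = (x - z) + η := by
        rw [hη, hT']; field_simp; ring
      rw [e]
      have h1 : |x - z| + s * η ≤ |x - z + η| := by
        have hs1 : |s| = 1 := by
          rw [← sq_abs] at hs
          exact (pow_eq_one_iff_of_nonneg (abs_nonneg s) two_ne_zero).1 hs
        calc |x - z| + s * η = s * (x - z + η) := by rw [mul_add, hsy]
          _ ≤ |s * (x - z + η)| := le_abs_self _
          _ = _ := by rw [abs_mul, hs1, one_mul]
      have h2 : max (r - |x - z + η|) 0 ≤ |a0 - s * η| := by
        refine max_le ?_ (abs_nonneg _)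
        have : r - |x - z| ≤ a0 := le_max_left _ _
        linarith [le_abs_self (a0 - s * η)]
      calc (max (r - |x - z + η|) 0) ^ 2 ≤ |a0 - s * η| ^ 2 := pow_le_pow_left₀ (le_max_right _ _) h2 2
        _ = (a0 - s * η) ^ 2 := sq_abs _
        _ = a0 ^ 2 - 2 * a0 * s * η + s ^ 2 * η ^ 2 := by ring
        _ = _ := by rw [hs, hη]; ring)
  refine hmain.trans ?_
  have h1 := vv_le m p hp x hx
  have h2 : (1 / T' ^ 2) * vv m p x ≤ 4 * m ^ 2 / T' ^ 2 := by
    calc _ ≤ (1 / T' ^ 2) * (4 * m ^ 2) := mul_le_mul_of_nonneg_left h1 (by positivity)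
      _ = _ := by ring
  have h3 : 0 ≤ (2 * a0 / T' * (2 * m)) * (s * polyP m p x) := mul_nonneg (by positivity) hd
  have h4 : -2 * a0 * s / T' * (2 * m * polyP m p x) = - ((2 * a0 / T' * (2 * m)) * (s * polyP m p x)) := by ring
  rw [h4]
  linarith
namespace PAProcess

variable {Ω : Type} [MeasurableSpace Ω] (P : PAProcess Ω)

def Bset (z δ : ℝ) (N k : ℕ) : Set Ω := {ω | ∀ j, N ≤ j → j ≤ k → |P.x j ω - z| < δ}

lemma meas_Bset (z δ : ℝ) (N k : ℕ) : MeasurableSet[P.F k] (P.Bset z δ N k) := by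
  have : P.Bset z δ N k = ⋂ j, ⋂ (_ : N ≤ j), ⋂ (_ : j ≤ k), {ω | |P.x j ω - z| < δ} := by
    ext ω; simp [Bset]
  rw [this]
  refine MeasurableSet.iInter fun j => MeasurableSet.iInter fun _ => MeasurableSet.iInter fun hj => ?_
  have h : Measurable[P.F k] (P.x j) := (P.x_measF j).mono (P.F.mono hj) le_rfl
  have h2 : Measurable (fun t : ℝ => |t - z|) := by fun_prop
  exact (h2.comp h) measurableSet_Iio

lemma Bset_succ (z δ : ℝ) (N k : ℕ) : P.Bset z δ N (k + 1) ⊆ P.Bset z δ N k :=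
  fun _ h j hj hk => h j hj (by omega)

lemma S_pos (hX0 : 0 < P.X0) (n : ℕ) : 0 < P.S n := by unfold S; omega

lemma S_succ (n : ℕ) : (P.S (n + 1) : ℝ) = P.S n + 2 * P.m := by
  rw [S_cast, S_cast]; push_cast; ring

lemma integrable_of_bdd (g : Ω → ℝ) (hg : Measurable g) (C : ℝ) (h : ∀ ω, |g ω| ≤ C) :
    Integrable g P.μ := by
  have := P.isProb
  exact Integrable.of_bound hg.aestronglyMeasurable C (ae_of_all _ h)

lemma v_tendsto (hX0 : 0 < P.X0) (z : ℝ) (hz : z ∈ Set.Ioo (0:ℝ) 1) (δ σ l : ℝ) (hδ : 0 < δ) (hσ : 0 < σ)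
    (hl : 0 < l) (hlm : l * (30 * P.m) ≤ 1)
    (hloc : ∀ x ∈ Set.Icc (0:ℝ) 1, |x - z| < δ → σ ≤ vv P.m P.p x ∧ 0 ≤ (x - z) * polyP P.m P.p x)
    (N : ℕ) :
    Tendsto (fun k => ∫ ω in P.Bset z δ N k, Real.exp (-l * P.S k * (P.x k ω - z) ^ 2) ∂P.μ) atTop (nhds 0) := by
  have := P.isProb
  have hm1 : (1:ℝ) ≤ P.m := by exact_mod_cast P.hm
  have hσ4 : σ ≤ 4 * (P.m:ℝ) ^ 2 :=
    (hloc z ⟨hz.1.le, hz.2.le⟩ (by simpa using hδ)).1.trans (vv_le _ _ P.hp _ ⟨hz.1.le, hz.2.le⟩)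
  obtain ⟨N1, hN1⟩ := exists_nat_ge (96 * l * (P.m:ℝ) ^ 4 / σ)
  have hS0 : ∀ n, (0:ℝ) < P.S n := fun n => by exact_mod_cast P.S_pos hX0 n
  have hSge : ∀ n : ℕ, (n:ℝ) ≤ P.S n := fun n => by
    rw [S_cast]
    have : (0:ℝ) ≤ n := by positivity
    have : (0:ℝ) ≤ P.X0 + P.Y0 := by positivity
    nlinarith
  have hint : ∀ k, Integrable (fun ω => Real.exp (-l * P.S k * (P.x k ω - z) ^ 2)) P.μ := fun k => by
    have := P.x_meas k
    refine P.integrable_of_bdd _ (by fun_prop) 1 (fun ω => ?_)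
    rw [abs_of_pos (Real.exp_pos _), Real.exp_le_one_iff]
    have := hS0 k
    have : 0 ≤ l * P.S k * (P.x k ω - z) ^ 2 := by positivity
    linarith
  have hv0 : ∀ k, 0 ≤ ∫ ω in P.Bset z δ N k, Real.exp (-l * P.S k * (P.x k ω - z) ^ 2) ∂P.μ := fun k =>
    integral_nonneg (fun ω => (Real.exp_pos _).le)
  refine sa_tendsto_zero _ (fun k => l * σ / (2 * P.S (k + 1))) (fun _ => 0)
    (l * σ / (2 * (P.S 1))) (by have := hS0 1; positivity) (max N N1) ?_ ?_ tendsto_const_nhds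
  · intro n _
    constructor
    · rw [div_div]
      refine div_le_div_of_nonneg_left (by positivity) (by have := hS0 (n+1); positivity) ?_
      rw [S_cast, S_cast]
      push_cast
      have h1 : (0:ℝ) ≤ (P.X0 + P.Y0) * n := by positivity
      nlinarith
    · rw [div_le_one (by have := hS0 (n+1); positivity), S_succ]
      have h2 := hS0 n
      have h3 : l * σ ≤ l * (4 * (P.m:ℝ) ^ 2) := mul_le_mul_of_nonneg_left hσ4 hl.le
      have h4 : l * (4 * (P.m:ℝ) ^ 2) ≤ P.m := by
        have := mul_le_mul_of_nonneg_left hlm (show (0:ℝ) ≤ P.m by positivity)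
        nlinarith [mul_pos hl (show (0:ℝ) < P.m ^ 2 by positivity)]
      linarith
  · intro n hn
    have hnN : N ≤ n := le_trans (le_max_left _ _) hn
    have hnN1 : N1 ≤ n := le_trans (le_max_right _ _) hn
    rw [abs_of_nonneg (hv0 _), abs_of_nonneg (hv0 _), mul_zero, add_zero]
    obtain ⟨hi, hle⟩ := P.step_le n (fun t => Real.exp (-l * P.S (n + 1) * (t - z) ^ 2)) (fun _ => (Real.exp_pos _).le)
      1 (fun t => by
        rw [Real.exp_le_one_iff]
        have := hS0 (n+1)
        have : 0 ≤ l * P.S (n+1) * (t - z) ^ 2 := by positivity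
        linarith)
      (P.Bset z δ N n) (P.meas_Bset z δ N n)
      (fun ω => (1 - l * σ / (2 * P.S (n + 1))) * Real.exp (-l * P.S n * (P.x n ω - z) ^ 2))
      ((hint n).const_mul _)
      (fun ω hω => by
        have h := hloc (P.x n ω) (P.x_mem n ω) (hω n hnN le_rfl)
        refine V_ineq P.m P.hm P.p P.hp (P.x n ω) z (P.x_mem n ω) hz (P.S n) (P.S (n+1)) l σ (hS0 n)
          (P.S_succ n) hl hlm ?_ h.1 h.2
        have h5 : (N1:ℝ) ≤ P.S (n+1) := by
          have := hSge (n+1)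
          push_cast at this
          have h6 : (N1:ℝ) ≤ n := by exact_mod_cast hnN1
          linarith
        have h7 := hN1.trans h5
        rw [div_le_iff₀ hσ] at h7
        linarith)
      (P.S_pos hX0 n)
    rw [integral_const_mul] at hle
    refine le_trans ?_ hle
    exact setIntegral_mono_set hi.integrableOn (ae_of_all _ fun ω => (Real.exp_pos _).le)
      (LE.le.eventuallyLE (P.Bset_succ z δ N n))

lemma w_bound (hX0 : 0 < P.X0) (z : ℝ) (δ : ℝ)
    (hloc : ∀ x ∈ Set.Icc (0:ℝ) 1, |x - z| < δ → ∃ s : ℝ, s ^ 2 = 1 ∧ s * (x - z) = |x - z| ∧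
      0 ≤ s * polyP P.m P.p x)
    (N n : ℕ) (hn : N ≤ n) (r : ℝ) (hr : 0 ≤ r) (k : ℕ) :
    ∫ ω in P.Bset z δ N (n + k) ∩ {ω | r ≤ |P.x n ω - z|}, (max (r - |P.x (n + k) ω - z|) 0) ^ 2 ∂P.μ
      ≤ 2 * P.m * (1 / P.S n - 1 / P.S (n + k)) := by
  have := P.isProb
  have hm1 : (1:ℝ) ≤ P.m := by exact_mod_cast P.hm
  have hS0 : ∀ n, (0:ℝ) < P.S n := fun n => by exact_mod_cast P.S_pos hX0 n
  have hmD : ∀ k, MeasurableSet[P.F (n + k)] (P.Bset z δ N (n + k) ∩ {ω | r ≤ |P.x n ω - z|}) := by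
    intro k
    refine (P.meas_Bset z δ N (n + k)).inter ?_
    have h : Measurable[P.F (n+k)] (P.x n) := (P.x_measF n).mono (P.F.mono (by omega)) le_rfl
    have h2 : Measurable (fun t : ℝ => |t - z|) := by fun_prop
    exact (h2.comp h) measurableSet_Ici
  have hbd : ∀ t : ℝ, (max (r - |t|) 0) ^ 2 ≤ r ^ 2 := fun t =>
    pow_le_pow_left₀ (le_max_right _ _) (max_le (by linarith [abs_nonneg t]) hr) 2
  have hint : ∀ k, Integrable (fun ω => (max (r - |P.x k ω - z|) 0) ^ 2) P.μ := fun k => by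
    have := P.x_meas k
    refine P.integrable_of_bdd _ (by fun_prop) (r ^ 2) (fun ω => ?_)
    rw [abs_of_nonneg (sq_nonneg _)]
    exact hbd _
  induction k with
  | zero =>
    simp only [add_zero, sub_self, mul_zero]
    refine le_of_eq (setIntegral_eq_zero_of_forall_eq_zero (fun ω hω => ?_))
    have : r ≤ |P.x n ω - z| := hω.2
    rw [max_eq_right (by linarith)]; simp
  | succ k ih =>
    rw [← add_assoc]
    obtain ⟨hi, hle⟩ := P.step_le (n + k) (fun t => (max (r - |t - z|) 0) ^ 2) (fun _ => sq_nonneg _)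
      (r ^ 2) (fun t => hbd _) _ (hmD k)
      (fun ω => (max (r - |P.x (n + k) ω - z|) 0) ^ 2 + 4 * P.m ^ 2 / (P.S (n + k + 1)) ^ 2)
      ((hint (n + k)).add (integrable_const _))
      (fun ω hω => by
        obtain ⟨s, hs1, hs2, hs3⟩ := hloc (P.x (n + k) ω) (P.x_mem _ ω) (hω.1 (n + k) (by omega) le_rfl)
        exact W_ineq P.m P.hm P.p P.hp (P.x (n + k) ω) z (P.x_mem _ ω) (P.S (n + k)) (P.S (n+k+1)) r s
          (hS0 _) (P.S_succ _) hs1 hs2 hs3)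
      (P.S_pos hX0 _)
    have h1 : ∫ ω in P.Bset z δ N (n + k + 1) ∩ {ω | r ≤ |P.x n ω - z|}, (max (r - |P.x (n + k + 1) ω - z|) 0) ^ 2 ∂P.μ
        ≤ ∫ ω in P.Bset z δ N (n + k) ∩ {ω | r ≤ |P.x n ω - z|}, (max (r - |P.x (n + k + 1) ω - z|) 0) ^ 2 ∂P.μ :=
      setIntegral_mono_set hi.integrableOn (ae_of_all _ fun ω => sq_nonneg _)
        (LE.le.eventuallyLE (Set.inter_subset_inter_left _ (P.Bset_succ z δ N (n + k))))
    rw [integral_add (hint _).integrableOn (integrable_const _), setIntegral_const] at hle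
    have h2 : P.μ.real (P.Bset z δ N (n + k) ∩ {ω | r ≤ |P.x n ω - z|}) • (4 * (P.m:ℝ) ^ 2 / (P.S (n + k + 1)) ^ 2)
       ≤ 4 * (P.m:ℝ) ^ 2 / (P.S (n + k + 1)) ^ 2 := by
      rw [smul_eq_mul]
      exact mul_le_of_le_one_left (by positivity) measureReal_le_one
    have h3 : 4 * (P.m:ℝ) ^ 2 / (P.S (n + k + 1)) ^ 2 ≤ 2 * P.m * (1 / P.S (n + k) - 1 / P.S (n + k + 1)) := by
      have ha := hS0 (n + k)
      have hb := hS0 (n + k + 1)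
      have e : 2 * P.m * (1 / (P.S (n + k) : ℝ) - 1 / P.S (n + k + 1)) = 4 * (P.m:ℝ) ^ 2 / (P.S (n + k) * P.S (n + k + 1)) := by
        rw [S_succ] at hb ⊢
        field_simp; ring
      rw [e]
      refine div_le_div_of_nonneg_left (by positivity) (by positivity) ?_
      rw [sq]
      refine mul_le_mul_of_nonneg_right ?_ hb.le
      rw [S_succ]; linarith
    linarith

lemma nonconv (hX0 : 0 < P.X0) (z : ℝ) (hz : z ∈ Set.Ioo (0:ℝ) 1) (δ σ : ℝ) (hδ : 0 < δ) (hσ : 0 < σ)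
    (hloc : ∀ x ∈ Set.Icc (0:ℝ) 1, |x - z| < δ → σ ≤ vv P.m P.p x)
    (hloc2 : ∀ x ∈ Set.Icc (0:ℝ) 1, |x - z| < δ → ∃ s : ℝ, s ^ 2 = 1 ∧ s * (x - z) = |x - z| ∧
      0 ≤ s * polyP P.m P.p x)
    (N : ℕ) :
    P.μ {ω | (∀ j, N ≤ j → |P.x j ω - z| < δ) ∧ Tendsto (fun n => P.x n ω) atTop (nhds z)} = 0 := by
  have := P.isProb
  have hm1 : (1:ℝ) ≤ P.m := by exact_mod_cast P.hm
  have hS0 : ∀ n, (0:ℝ) < P.S n := fun n => by exact_mod_cast P.S_pos hX0 n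
  set G := {ω | (∀ j, N ≤ j → |P.x j ω - z| < δ) ∧ Tendsto (fun n => P.x n ω) atTop (nhds z)} with hG
  have hGm : MeasurableSet G := by
    have h1 : MeasurableSet {ω | Tendsto (fun n => P.x n ω) atTop (nhds z)} :=
      measurableSet_tendsto (nhds z) (fun n => P.x_meas n)
    have h2 : MeasurableSet {ω | ∀ j, N ≤ j → |P.x j ω - z| < δ} := by
      have : {ω | ∀ j, N ≤ j → |P.x j ω - z| < δ} = ⋂ k, P.Bset z δ N k := by
        ext ω
        simp only [Bset, Set.mem_setOf_eq, Set.mem_iInter]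
        exact ⟨fun h i j hj _ => h j hj, fun h j hj => h j j hj le_rfl⟩
      rw [this]
      exact MeasurableSet.iInter fun k => P.F.le k _ (P.meas_Bset z δ N k)
    exact h2.inter h1
  set l : ℝ := 1 / (30 * P.m) with hl
  have hl0 : 0 < l := by positivity
  have hv := P.v_tendsto hX0 z hz δ σ l hδ hσ hl0 (by rw [hl]; field_simp; rfl) (fun x hx hxd => by
    refine ⟨hloc x hx hxd, ?_⟩
    obtain ⟨s, h1, h2, h3⟩ := hloc2 x hx hxd
    have : (x - z) * polyP P.m P.p x = |x - z| * (s * polyP P.m P.p x) := by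
      rw [← h2]
      calc _ = s ^ 2 * ((x - z) * polyP P.m P.p x) := by rw [h1, one_mul]
        _ = _ := by ring
    rw [this]
    exact mul_nonneg (abs_nonneg _) h3) N
  set v : ℕ → ℝ := fun k => ∫ ω in P.Bset z δ N k, Real.exp (-l * P.S k * (P.x k ω - z) ^ 2) ∂P.μ with hvdef
  have key : ∀ R : ℝ, 0 < R → ∀ n ≥ N, P.μ.real G ≤ Real.exp (l * R) * v n + 2 * P.m / R := by
    intro R hR n hn
    have hxm := P.x_meas n
    set r := Real.sqrt (R / P.S n) with hr
    have hr2 : r ^ 2 = R / P.S n := Real.sq_sqrt (by have := hS0 n; positivity)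
    have hr0 : 0 < r := Real.sqrt_pos.2 (by have := hS0 n; positivity)
    have hsub : G ⊆ ({ω | Real.exp (-(l * R)) ≤ Real.exp (-l * P.S n * (P.x n ω - z) ^ 2)} ∩ P.Bset z δ N n) ∪
        (G ∩ {ω | r ≤ |P.x n ω - z|}) := by
      intro ω hω
      by_cases h : r ≤ |P.x n ω - z|
      · exact Or.inr ⟨hω, h⟩
      · refine Or.inl ⟨?_, fun j hj _ => hω.1 j hj⟩
        rw [Set.mem_setOf_eq, Real.exp_le_exp]
        have h1 : (P.x n ω - z) ^ 2 ≤ R / P.S n := by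
          rw [← hr2, ← sq_abs]
          exact pow_le_pow_left₀ (abs_nonneg _) (not_le.1 h).le 2
        rw [le_div_iff₀ (hS0 n)] at h1
        have := mul_le_mul_of_nonneg_left h1 hl0.le
        linarith
    have hA : P.μ.real ({ω | Real.exp (-(l * R)) ≤ Real.exp (-l * P.S n * (P.x n ω - z) ^ 2)} ∩ P.Bset z δ N n)
        ≤ Real.exp (l * R) * v n := by
      have hms : MeasurableSet {ω | Real.exp (-(l * R)) ≤ Real.exp (-l * P.S n * (P.x n ω - z) ^ 2)} :=
        measurableSet_le measurable_const (by fun_prop)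
      have hi : Integrable (fun ω => Real.exp (-l * P.S n * (P.x n ω - z) ^ 2)) P.μ := by
        refine P.integrable_of_bdd _ (by fun_prop) 1 (fun ω => ?_)
        rw [abs_of_pos (Real.exp_pos _), Real.exp_le_one_iff]
        have := hS0 n
        have : 0 ≤ l * P.S n * (P.x n ω - z) ^ 2 := by positivity
        linarith
      have h1 := mul_meas_ge_le_integral_of_nonneg (μ := P.μ.restrict (P.Bset z δ N n))
        (ae_of_all _ fun ω => (Real.exp_pos (-l * P.S n * (P.x n ω - z) ^ 2)).le) hi.integrableOn (Real.exp (-(l * R)))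
      rw [measureReal_restrict_apply hms] at h1
      have h2 := mul_le_mul_of_nonneg_left h1 (Real.exp_pos (l * R)).le
      rw [← mul_assoc, ← Real.exp_add, add_neg_cancel, Real.exp_zero, one_mul] at h2
      exact h2
    have hB : P.μ.real (G ∩ {ω | r ≤ |P.x n ω - z|}) ≤ 2 * P.m / R := by
      have hDm : MeasurableSet (G ∩ {ω | r ≤ |P.x n ω - z|}) :=
        hGm.inter (measurableSet_le measurable_const (by fun_prop))
      have hbd : ∀ t : ℝ, (max (r - |t|) 0) ^ 2 ≤ r ^ 2 := fun t =>
        pow_le_pow_left₀ (le_max_right _ _) (max_le (by linarith [abs_nonneg t]) hr0.le) 2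
      have hlim : Tendsto (fun k => ∫ ω in G ∩ {ω | r ≤ |P.x n ω - z|}, (max (r - |P.x (n + k) ω - z|) 0) ^ 2 ∂P.μ)
          atTop (nhds (∫ ω in G ∩ {ω | r ≤ |P.x n ω - z|}, r ^ 2 ∂P.μ)) := by
        refine tendsto_integral_of_dominated_convergence (fun _ => r ^ 2) (fun k => ?_) (integrable_const _) (fun k => ?_) ?_
        · have := P.x_meas (n + k)
          exact Measurable.aestronglyMeasurable (by fun_prop)
        · refine ae_of_all _ fun ω => ?_
          rw [Real.norm_eq_abs, abs_of_nonneg (sq_nonneg _)]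
          exact hbd _
        · rw [ae_restrict_iff' hDm]
          refine ae_of_all _ fun ω hω => ?_
          have h1 : Tendsto (fun k => P.x (n + k) ω) atTop (nhds z) := by
            have := hω.1.2.comp (tendsto_add_atTop_nat n)
            refine this.congr fun k => ?_
            simp [add_comm]
          have hc : Continuous (fun t : ℝ => (max (r - |t - z|) 0) ^ 2) := by fun_prop
          have h2 := (hc.tendsto z).comp h1
          simp only [sub_self, abs_zero, sub_zero, max_eq_left hr0.le] at h2
          exact h2
      have hle : ∀ k, ∫ ω in G ∩ {ω | r ≤ |P.x n ω - z|}, (max (r - |P.x (n + k) ω - z|) 0) ^ 2 ∂P.μ ≤ 2 * P.m / P.S n := by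
        intro k
        have h1 := P.w_bound hX0 z δ hloc2 N n hn r hr0.le k
        have h2 : ∫ ω in G ∩ {ω | r ≤ |P.x n ω - z|}, (max (r - |P.x (n + k) ω - z|) 0) ^ 2 ∂P.μ ≤
          ∫ ω in P.Bset z δ N (n + k) ∩ {ω | r ≤ |P.x n ω - z|}, (max (r - |P.x (n + k) ω - z|) 0) ^ 2 ∂P.μ := by
          refine setIntegral_mono_set ?_ (ae_of_all _ fun ω => sq_nonneg _)
            (LE.le.eventuallyLE (Set.inter_subset_inter_left _ (fun ω hω j hj _ => hω.1 j hj)))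
          have := P.x_meas (n + k)
          refine (P.integrable_of_bdd _ (by fun_prop) (r ^ 2) (fun ω => ?_)).integrableOn
          rw [abs_of_nonneg (sq_nonneg _)]
          exact hbd _
        have h3 : 2 * P.m * (1 / (P.S n : ℝ) - 1 / P.S (n + k)) ≤ 2 * P.m / P.S n := by
          have : 0 ≤ 2 * P.m * (1 / (P.S (n + k) : ℝ)) := by positivity
          have e : 2 * P.m * (1 / (P.S n : ℝ) - 1 / P.S (n + k)) = 2 * P.m / P.S n - 2 * P.m * (1 / (P.S (n + k) : ℝ)) := by ring
          rw [e]; linarith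
        linarith
      have h4 := le_of_tendsto' hlim hle
      rw [setIntegral_const, smul_eq_mul, hr2] at h4
      have h5 := hS0 n
      rw [le_div_iff₀ hR]
      rw [mul_div_assoc', div_le_div_iff_of_pos_right h5] at h4
      exact h4
    calc P.μ.real G ≤ _ := measureReal_mono hsub
      _ ≤ _ := measureReal_union_le _ _
      _ ≤ _ := add_le_add hA hB
  have key2 : ∀ R : ℝ, 0 < R → P.μ.real G ≤ 2 * P.m / R := by
    intro R hR
    have h1 : Tendsto (fun n => Real.exp (l * R) * v n + 2 * P.m / R) atTop (nhds (Real.exp (l * R) * 0 + 2 * P.m / R)) :=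
      (hv.const_mul _).add_const _
    rw [mul_zero, zero_add] at h1
    exact ge_of_tendsto h1 (eventually_atTop.2 ⟨N, key R hR⟩)
  have key3 : P.μ.real G ≤ 0 := by
    have h1 : Tendsto (fun R : ℝ => 2 * P.m / R) atTop (nhds 0) := tendsto_const_nhds.div_atTop tendsto_id
    exact ge_of_tendsto h1 (eventually_atTop.2 ⟨1, fun R hR => key2 R (by linarith)⟩)
  have key4 : P.μ.real G = 0 := le_antisymm key3 measureReal_nonneg
  exact (measureReal_eq_zero_iff).1 key4

end PAProcess
lemma QQ_lin (m : ℕ) (p : ℕ → ℝ) (x c d : ℝ) :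
    QQ m p x (fun j => ((j:ℝ) - c) / d) (fun j => ((j:ℝ) - c) / d) = (m * x - c) / d := by
  rw [← QQ_id m p x]
  have hc : c = QQ m p x (fun _ => c) (fun _ => c) := (QQ_const m p x c).symm
  conv_rhs => rw [hc]
  unfold QQ
  rw [← Finset.sum_sub_distrib, Finset.sum_div]
  refine Finset.sum_congr rfl (fun j _ => ?_)
  ring

namespace PAProcess

variable {Ω : Type} [MeasurableSpace Ω] (P : PAProcess Ω)

def U (n : ℕ) (ω : Ω) : ℝ :=
  max 0 (min (P.m:ℝ) ((P.X (n + 1) ω : ℝ) - P.X n ω - P.m * ((P.A (n + 1) ω : ℝ) - P.A n ω)))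

def xi (n : ℕ) (ω : Ω) : ℝ := (P.U n ω - P.m * P.x n ω) / (n + 2)

def Mg (n : ℕ) (ω : Ω) : ℝ := ∑ i ∈ Finset.range n, P.xi i ω

lemma U_red (n j : ℕ) (hj : j ≤ P.m) (ω : Ω) (h : ω ∈ P.redE n j) : P.U n ω = j := by
  have hj' : (j:ℝ) ≤ P.m := by exact_mod_cast hj
  unfold U
  rw [h.1, h.2]
  push_cast
  have : (P.X n ω : ℝ) + j + P.m - P.X n ω - P.m * ((P.A n ω : ℝ) + 1 - P.A n ω) = j := by ring
  rw [this, min_eq_right hj', max_eq_right (by positivity)]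

lemma U_blu (n j : ℕ) (hj : j ≤ P.m) (ω : Ω) (h : ω ∈ P.bluE n j) : P.U n ω = j := by
  have hj' : (j:ℝ) ≤ P.m := by exact_mod_cast hj
  unfold U
  rw [h.1, h.2]
  push_cast
  have : (P.X n ω : ℝ) + j - P.X n ω - P.m * ((P.A n ω : ℝ) - P.A n ω) = j := by ring
  rw [this, min_eq_right hj', max_eq_right (by positivity)]

lemma xi_measF (n : ℕ) : Measurable[P.F (n + 1)] (P.xi n) := by
  have h1 : Measurable[P.F (n+1)] (P.x n) := (P.x_measF n).mono (P.F.mono (by omega)) le_rfl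
  have hc : Measurable (fun k : ℕ => (k:ℝ)) := measurable_from_top
  have h2 : Measurable[P.F (n+1)] (fun ω => (P.X n ω : ℝ)) :=
    hc.comp ((P.adaptedX n).mono (P.F.mono (by omega)) le_rfl)
  have h3 : Measurable[P.F (n+1)] (fun ω => (P.A n ω : ℝ)) :=
    hc.comp ((P.adaptedA n).mono (P.F.mono (by omega)) le_rfl)
  have h4 : Measurable[P.F (n+1)] (fun ω => (P.X (n+1) ω : ℝ)) := hc.comp (P.adaptedX (n+1))
  have h5 : Measurable[P.F (n+1)] (fun ω => (P.A (n+1) ω : ℝ)) := hc.comp (P.adaptedA (n+1))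
  unfold xi U
  exact ((measurable_const.max (measurable_const.min ((h4.sub h2).sub ((h5.sub h3).const_mul _)))).sub
    (h1.const_mul _)).div_const _

lemma xi_bdd (n : ℕ) (ω : Ω) : |P.xi n ω| ≤ P.m / (n + 2) := by
  unfold xi
  rw [abs_div, abs_of_pos (show (0:ℝ) < n + 2 by positivity)]
  refine div_le_div_of_nonneg_right ?_ (by positivity)
  have h1 : 0 ≤ P.U n ω := le_max_left _ _
  have h2 : P.U n ω ≤ P.m := max_le (by positivity) (min_le_left _ _)
  have hx := P.x_mem n ω
  have h3 : 0 ≤ P.m * P.x n ω := mul_nonneg (by positivity) hx.1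
  have h4 : P.m * P.x n ω ≤ P.m := mul_le_of_le_one_right (by positivity) hx.2
  rw [abs_le]; constructor <;> linarith

lemma xi_int (n : ℕ) : Integrable (P.xi n) P.μ :=
  P.integrable_of_bdd _ ((P.xi_measF n).mono (P.F.le _) le_rfl) _ (P.xi_bdd n)

lemma xi_condExp (n : ℕ) : P.μ[P.xi n | P.F n] =ᵐ[P.μ] 0 := by
  have hx : ∀ j : ℕ, StronglyMeasurable[P.F n] (fun ω => ((j:ℝ) - P.m * P.x n ω) / ((n:ℝ) + 2)) := fun j =>
    (((P.x_measF n).const_mul _).const_sub _ |>.div_const _).stronglyMeasurable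
  have hb : ∀ j ≤ P.m, ∀ ω, |((j:ℝ) - P.m * P.x n ω) / ((n:ℝ) + 2)| ≤ P.m := by
    intro j hj ω
    have hj' : (j:ℝ) ≤ P.m := by exact_mod_cast hj
    have hj0 : (0:ℝ) ≤ j := by positivity
    have hx := P.x_mem n ω
    have h3 : 0 ≤ P.m * P.x n ω := mul_nonneg (by positivity) hx.1
    have h4 : P.m * P.x n ω ≤ P.m := mul_le_of_le_one_right (by positivity) hx.2
    rw [abs_div, abs_of_pos (show (0:ℝ) < n + 2 by positivity)]
    refine (div_le_self (abs_nonneg _) (by have : (0:ℝ) ≤ n := by positivity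
                                           linarith)).trans ?_
    rw [abs_le]; constructor <;> linarith
  obtain ⟨_, hc⟩ := P.condExp_step n (fun j ω => ((j:ℝ) - P.m * P.x n ω) / ((n:ℝ) + 2))
    (fun j ω => ((j:ℝ) - P.m * P.x n ω) / ((n:ℝ) + 2)) P.m hx hx hb hb (P.xi n)
    (fun ω j hj h => by unfold xi; rw [P.U_red n j hj ω h])
    (fun ω j hj h => by unfold xi; rw [P.U_blu n j hj ω h])
  refine hc.trans (ae_of_all _ fun ω => ?_)
  simp [QQ_lin]

lemma Mg_measF (n : ℕ) : Measurable[P.F n] (P.Mg n) := by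
  unfold Mg
  refine Finset.measurable_fun_sum _ (fun i hi => ?_)
  exact (P.xi_measF i).mono (P.F.mono (by simpa using hi)) le_rfl

lemma Mg_bdd (n : ℕ) : ∃ C, ∀ ω, |P.Mg n ω| ≤ C := by
  refine ⟨∑ i ∈ Finset.range n, (P.m:ℝ) / (i + 2), fun ω => ?_⟩
  exact (Finset.abs_sum_le_sum_abs _ _).trans (Finset.sum_le_sum fun i _ => P.xi_bdd i ω)

lemma Mg_int (n : ℕ) : Integrable (P.Mg n) P.μ := by
  obtain ⟨C, hC⟩ := P.Mg_bdd n
  exact P.integrable_of_bdd _ ((P.Mg_measF n).mono (P.F.le _) le_rfl) C hC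

lemma Mg_succ (n : ℕ) (ω : Ω) : P.Mg (n + 1) ω = P.Mg n ω + P.xi n ω := by
  unfold Mg; rw [Finset.sum_range_succ]

lemma Mg_sq (n : ℕ) : Integrable (fun ω => (P.Mg n ω) ^ 2) P.μ ∧
    ∫ ω, (P.Mg n ω) ^ 2 ∂P.μ ≤ P.m ^ 2 * (1 - 1 / ((n:ℝ) + 1)) := by
  have := P.isProb
  have hint : ∀ n, Integrable (fun ω => (P.Mg n ω) ^ 2) P.μ := fun n => by
    obtain ⟨C, hC⟩ := P.Mg_bdd n
    refine P.integrable_of_bdd _ (((P.Mg_measF n).mono (P.F.le _) le_rfl).pow_const 2) (C ^ 2) (fun ω => ?_)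
    rw [abs_pow]
    exact pow_le_pow_left₀ (abs_nonneg _) (hC ω) 2
  refine ⟨hint n, ?_⟩
  induction n with
  | zero => simp [Mg]
  | succ n ih =>
    have hi2 : Integrable (P.Mg n * P.xi n) P.μ := by
      obtain ⟨C, hC⟩ := P.Mg_bdd n
      exact (P.xi_int n).bdd_mul (c := C) ((P.Mg_measF n).mono (P.F.le _) le_rfl).aestronglyMeasurable
        (ae_of_all _ hC)
    have hi3 : Integrable (fun ω => (P.xi n ω) ^ 2) P.μ := by
      refine P.integrable_of_bdd _ (((P.xi_measF n).mono (P.F.le _) le_rfl).pow_const 2) ((P.m / (n + 2)) ^ 2) (fun ω => ?_)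
      rw [abs_pow]
      exact pow_le_pow_left₀ (abs_nonneg _) (P.xi_bdd n ω) 2
    have hcross : ∫ ω, P.Mg n ω * P.xi n ω ∂P.μ = 0 := by
      have h1 := condExp_mul_of_stronglyMeasurable_left (μ := P.μ) (P.Mg_measF n).stronglyMeasurable hi2 (P.xi_int n)
      have h2 : P.μ[P.Mg n * P.xi n | P.F n] =ᵐ[P.μ] 0 := by
        filter_upwards [h1, P.xi_condExp n] with ω h1 h2
        rw [h1, Pi.mul_apply, h2]; simp
      have h3 := integral_condExp (μ := P.μ) (f := P.Mg n * P.xi n) (P.F.le n)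
      rw [integral_congr_ae h2] at h3
      simpa using h3.symm
    have hexp : ∫ ω, (P.Mg (n + 1) ω) ^ 2 ∂P.μ = ∫ ω, (P.Mg n ω) ^ 2 ∂P.μ + ∫ ω, (P.xi n ω) ^ 2 ∂P.μ := by
      have e : ∀ ω, (P.Mg (n + 1) ω) ^ 2 = (P.Mg n ω) ^ 2 + (P.xi n ω) ^ 2 + 2 * (P.Mg n ω * P.xi n ω) := fun ω => by
        rw [Mg_succ]; ring
      simp only [e]
      have hi2' : Integrable (fun ω => P.Mg n ω * P.xi n ω) P.μ := hi2
      have hi4 : Integrable (fun ω => P.Mg n ω ^ 2 + P.xi n ω ^ 2) P.μ := (hint n).add hi3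
      rw [integral_add hi4 (hi2'.const_mul 2), integral_add (hint n) hi3, integral_const_mul, hcross]
      ring
    have hxi : ∫ ω, (P.xi n ω) ^ 2 ∂P.μ ≤ (P.m / (n + 2)) ^ 2 := by
      have : ∫ ω, (P.xi n ω) ^ 2 ∂P.μ ≤ ∫ ω, ((P.m:ℝ) / (n + 2)) ^ 2 ∂P.μ := by
        refine integral_mono hi3 (integrable_const _) (fun ω => ?_)
        rw [← sq_abs]
        exact pow_le_pow_left₀ (abs_nonneg _) (P.xi_bdd n ω) 2
      simpa using this
    have hfin : ((P.m:ℝ) / (n + 2)) ^ 2 ≤ P.m ^ 2 * (1 / ((n:ℝ) + 1) - 1 / ((n:ℝ) + 2)) := by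
      rw [div_pow, div_eq_mul_one_div]
      refine mul_le_mul_of_nonneg_left ?_ (by positivity)
      rw [div_sub_div _ _ (by positivity) (by positivity), div_le_div_iff₀ (by positivity) (by positivity)]
      have : (0:ℝ) ≤ n := by positivity
      nlinarith
    rw [hexp]
    push_cast
    have e2 : (n:ℝ) + 1 + 1 = n + 2 := by ring
    rw [e2]
    linarith

lemma Mg_conv : ∀ᵐ ω ∂P.μ, ∃ c, Tendsto (fun n => P.Mg n ω) atTop (nhds c) := by
  have := P.isProb
  have hM : Martingale P.Mg P.F P.μ := by
    refine martingale_of_condExp_sub_eq_zero_nat (fun n => (P.Mg_measF n).stronglyMeasurable) P.Mg_int (fun n => ?_)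
    have : P.Mg (n + 1) - P.Mg n = P.xi n := by
      ext ω; simp [Mg_succ]
    rw [this]
    exact P.xi_condExp n
  refine hM.submartingale.exists_ae_tendsto_of_bdd (R := (1 + (P.m:ℝ) ^ 2).toNNReal) (fun n => ?_)
  rw [eLpNorm_one_eq_lintegral_enorm, ← ofReal_integral_norm_eq_lintegral_enorm (P.Mg_int n)]
  refine ENNReal.ofReal_le_ofReal ?_
  obtain ⟨h1, h2⟩ := P.Mg_sq n
  have h3 : ∫ ω, ‖P.Mg n ω‖ ∂P.μ ≤ ∫ ω, (1 + (P.Mg n ω) ^ 2) ∂P.μ := by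
    refine integral_mono (P.Mg_int n).norm ((integrable_const _).add h1) (fun ω => ?_)
    simp only [Real.norm_eq_abs]
    rw [← sq_abs]
    nlinarith [sq_nonneg (|P.Mg n ω| - 1), abs_nonneg (P.Mg n ω)]
  rw [integral_add (integrable_const _) h1] at h3
  simp only [integral_const, probReal_univ, smul_eq_mul, mul_one] at h3
  have h4 : (P.m:ℝ) ^ 2 * (1 - 1 / ((n:ℝ) + 1)) ≤ P.m ^ 2 := by
    refine mul_le_of_le_one_right (by positivity) ?_
    have : 0 ≤ 1 / ((n:ℝ) + 1) := by positivity
    linarith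
  linarith

lemma x_tendsto (hX0 : 0 < P.X0) (z : ℝ) (ω : Ω)
    (hstep : ∀ n, ∃ j ≤ P.m, ω ∈ P.redE n j ∨ ω ∈ P.bluE n j)
    (hM : ∃ c, Tendsto (fun n => P.Mg n ω) atTop (nhds c))
    (ha : Tendsto (fun n => P.a n ω) atTop (nhds z)) :
    Tendsto (fun n => P.x n ω) atTop (nhds z) := by
  obtain ⟨c, hc⟩ := hM
  have hm1 : (1:ℝ) ≤ P.m := by exact_mod_cast P.hm
  have hm0 : (P.m:ℝ) ≠ 0 := by positivity
  have hS0 : ∀ n, (0:ℝ) < P.S n := fun n => by exact_mod_cast P.S_pos hX0 n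
  set d : ℕ → ℝ := fun n => ((P.X n ω : ℝ) - P.m * P.A n ω) / (P.m * (n + 1)) with hd
  set al : ℕ → ℝ := fun n => P.m * ((n:ℝ) + 1) / P.S n with hal
  set be : ℕ → ℝ := fun n => P.a n ω * (P.m * ((P.A0:ℝ) + P.B0 + n) / P.S n) with hbe
  have hratio : ∀ b : ℝ, Tendsto (fun n : ℕ => P.m * (b + n) / (P.S n : ℝ)) atTop (nhds (1 / 2)) := by
    intro b
    have hnum : Tendsto (fun n : ℕ => (P.m:ℝ) * (b / n + 1)) atTop (nhds (P.m * (0 + 1))) :=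
      ((tendsto_const_div_atTop_nhds_zero_nat b).add_const 1).const_mul _
    have hden : Tendsto (fun n : ℕ => ((P.X0:ℝ) + P.Y0) / n + 2 * P.m) atTop (nhds (0 + 2 * P.m)) :=
      (tendsto_const_div_atTop_nhds_zero_nat _).add_const _
    have h := hnum.div hden (by simp [hm0])
    have e : (P.m:ℝ) * (0 + 1) / (0 + 2 * P.m) = 1 / 2 := by field_simp; simp
    rw [e] at h
    refine h.congr' ?_
    filter_upwards [eventually_gt_atTop 0] with n hn
    have hn' : (n:ℝ) ≠ 0 := by positivity
    have hs := (hS0 n).ne'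
    simp only [Pi.div_apply]
    rw [S_cast] at hs ⊢
    have h1 : ((P.X0:ℝ) + P.Y0) / n + 2 * P.m = (P.X0 + P.Y0 + 2 * P.m * n) / n := by field_simp
    have h2 : b / n + 1 = (b + n) / n := by field_simp
    rw [h1, h2]
    field_simp
  have hal_lim : Tendsto al atTop (nhds (1 / 2)) := by
    refine (hratio 1).congr fun n => ?_
    simp only [hal]; rw [add_comm]
  have hbe_lim : Tendsto be atTop (nhds (z * (1 / 2))) := ha.mul (hratio _)
  have hxe : ∀ n ≥ 1, P.x n ω = al n * d n + be n := by
    intro n hn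
    have h1 := (hS0 n).ne'
    have hn' : (0:ℝ) < n := by exact_mod_cast hn
    have h2 : (P.A0:ℝ) + P.B0 + n ≠ 0 := by positivity
    simp only [hal, hd, hbe]
    unfold x a
    field_simp
    ring
  set e : ℕ → ℝ := fun n => (P.Mg n ω - c) / P.m with he
  have he_lim : Tendsto e atTop (nhds 0) := by
    have := (hc.sub_const c).div_const (P.m:ℝ)
    simpa using this
  have hdrec : ∀ n, d (n + 1) = d n + (P.x n ω - d n) / (n + 2) + (e (n + 1) - e n) := by
    intro n
    have hU : (P.X (n + 1) ω : ℝ) - P.m * P.A (n + 1) ω = (P.X n ω : ℝ) - P.m * P.A n ω + P.U n ω := by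
      obtain ⟨j, hj, h | h⟩ := hstep n
      · rw [P.U_red n j hj ω h, h.1, h.2]; push_cast; ring
      · rw [P.U_blu n j hj ω h, h.1, h.2]; push_cast; ring
    simp only [hd, he]
    rw [Mg_succ, hU]
    unfold xi
    have h1 : (n:ℝ) + 1 ≠ 0 := by positivity
    have h2 : (n:ℝ) + 2 ≠ 0 := by positivity
    have h3 : ((n + 1 : ℕ) : ℝ) + 1 = n + 2 := by push_cast; ring
    rw [h3]
    field_simp
    ring
  have hw : Tendsto (fun n => d n - z - e n) atTop (nhds 0) := by
    have hev : ∀ᶠ n in atTop, al n < 3 / 4 ∧ 1 / 4 < al n ∧ 1 ≤ n :=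
      (hal_lim.eventually_lt_const (by norm_num)).and
        ((hal_lim.eventually_const_lt (by norm_num)).and (eventually_ge_atTop 1))
    obtain ⟨N, hN⟩ := hev.exists_forall_of_atTop
    have hr : Tendsto (fun n => |(-(1 - al n) * (z + e n) + be n) / (1 - al n)|) atTop (nhds 0) := by
      have h1 : Tendsto (fun n => (-(1 - al n) * (z + e n) + be n) / (1 - al n)) atTop
        (nhds ((-(1 - 1 / 2) * (z + 0) + z * (1 / 2)) / (1 - 1 / 2))) :=
        (((hal_lim.const_sub 1).neg.mul (he_lim.const_add z)).add hbe_lim).div (hal_lim.const_sub 1) (by norm_num)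
      have e0 : (-(1 - 1 / 2) * (z + 0) + z * (1 / 2)) / (1 - 1 / 2) = 0 := by ring
      rw [e0] at h1
      simpa using h1.abs
    refine sa_tendsto_zero _ (fun n => (1 - al n) / (n + 2)) _ (1 / 8) (by norm_num) N ?_ ?_ hr
    · intro n hn
      obtain ⟨h1, h2, _⟩ := hN n hn
      have hn0 : (0:ℝ) ≤ n := by positivity
      constructor
      · rw [div_le_div_iff₀ (by positivity) (by positivity)]
        nlinarith
      · rw [div_le_one (by positivity)]
        linarith
    · intro n hn
      obtain ⟨h1, h2, h3⟩ := hN n hn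
      have hn0 : (0:ℝ) ≤ n := by positivity
      have h4 : 1 - al n ≠ 0 := by intro h; linarith
      have hg : 0 ≤ (1 - al n) / ((n:ℝ) + 2) := div_nonneg (by linarith) (by positivity)
      have hg1 : (1 - al n) / ((n:ℝ) + 2) ≤ 1 := by
        rw [div_le_one (by positivity)]; linarith
      have heq : d (n + 1) - z - e (n + 1) = (1 - (1 - al n) / ((n:ℝ) + 2)) * (d n - z - e n)
        + (1 - al n) / ((n:ℝ) + 2) * ((-(1 - al n) * (z + e n) + be n) / (1 - al n)) := by
        rw [hdrec, hxe n h3]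
        have h5 : (n:ℝ) + 2 ≠ 0 := by positivity
        field_simp
        ring
      rw [heq]
      refine (abs_add_le _ _).trans ?_
      rw [abs_mul, abs_mul, abs_of_nonneg hg, abs_of_nonneg (sub_nonneg.2 hg1)]
  have hd_lim : Tendsto d atTop (nhds z) := by
    have := (hw.add he_lim).add_const z
    simp only [add_zero, zero_add] at this
    refine this.congr fun n => ?_
    ring
  have hfin := (hal_lim.mul hd_lim).add hbe_lim
  have e1 : 1 / 2 * z + z * (1 / 2) = z := by ring
  rw [e1] at hfin
  refine hfin.congr' ?_
  filter_upwards [eventually_ge_atTop 1] with n hn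
  exact (hxe n hn).symm

end PAProcess

/-- **Nonlinear models, unstable equilibria.** In a nonlinear model with `X_0, Y_0 > 0`, if
`z ∈ Z_P ∩ (0,1)` is an unstable zero, i.e. there is `ε > 0` with `P < 0` on `(z−ε, z)` and
`P > 0` on `(z, z+ε)`, then the probability that `a_n → z` is zero. -/
theorem nonlinear_model_unstable_equilibrium
    {Ω : Type} [MeasurableSpace Ω] (P : PAProcess Ω)
    (hnonlin : ∃ k ≤ P.m, P.p k ≠ (k : ℝ) / P.m)
    (hX0 : 0 < P.X0) (hY0 : 0 < P.Y0)
    (z : ℝ) (hz : z ∈ P.Zp ∩ Set.Ioo (0 : ℝ) 1)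
    (ε : ℝ) (hε : 0 < ε)
    (hneg : ∀ y ∈ Set.Ioo (z - ε) z, P.poly y < 0)
    (hpos : ∀ y ∈ Set.Ioo z (z + ε), 0 < P.poly y) :
    P.μ {ω | Tendsto (fun n => P.a n ω) atTop (nhds z)} = 0 := by
  have := P.isProb
  have hz0 : polyP P.m P.p z = 0 := hz.1.2
  have hv := vv_pos P.m P.hm P.p P.hp z hz.2 ε hε hpos
  have hcont := (vv_continuous P.m P.p).tendsto z
  have hev := hcont.eventually_const_lt (show vv P.m P.p z / 2 < vv P.m P.p z by linarith)
  obtain ⟨δ1, hδ1, hball⟩ := Metric.eventually_nhds_iff.1 hev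
  set δ := min δ1 ε with hδ
  have hδ0 : 0 < δ := lt_min hδ1 hε
  have hloc : ∀ x ∈ Set.Icc (0:ℝ) 1, |x - z| < δ → vv P.m P.p z / 2 ≤ vv P.m P.p x := by
    intro x _ hx
    refine (hball ?_).le
    rw [Real.dist_eq]
    exact hx.trans_le (min_le_left _ _)
  have hloc2 : ∀ x ∈ Set.Icc (0:ℝ) 1, |x - z| < δ → ∃ s : ℝ, s ^ 2 = 1 ∧ s * (x - z) = |x - z| ∧
      0 ≤ s * polyP P.m P.p x := by
    intro x _ hx
    have hx' := abs_lt.1 (hx.trans_le (min_le_right _ _))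
    rcases lt_trichotomy x z with h | h | h
    · refine ⟨-1, by norm_num, ?_, ?_⟩
      · rw [abs_of_neg (by linarith)]; ring
      · have h1 : polyP P.m P.p x < 0 := hneg x ⟨by linarith, h⟩
        linarith
    · refine ⟨1, by norm_num, ?_, ?_⟩
      · rw [h]; simp
      · rw [h, hz0]; simp
    · refine ⟨1, by norm_num, ?_, ?_⟩
      · rw [abs_of_pos (by linarith)]; ring
      · have h1 : 0 < polyP P.m P.p x := hpos x ⟨h, by linarith⟩
        linarith
  have hnull : ∀ N : ℕ, P.μ {ω | (∀ j, N ≤ j → |P.x j ω - z| < δ) ∧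
      Tendsto (fun n => P.x n ω) atTop (nhds z)} = 0 := fun N =>
    P.nonconv hX0 z hz.2 δ _ hδ0 (half_pos hv) hloc hloc2 N
  have hU := measure_iUnion_null hnull
  have hae : ∀ᵐ ω ∂P.μ, ω ∉ ⋃ N : ℕ, {ω | (∀ j, N ≤ j → |P.x j ω - z| < δ) ∧
      Tendsto (fun n => P.x n ω) atTop (nhds z)} := measure_eq_zero_iff_ae_notMem.1 hU
  refine measure_eq_zero_iff_ae_notMem.2 ?_
  filter_upwards [hae, ae_all_iff.2 P.ae_step, P.Mg_conv] with ω h1 h2 h3 h4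
  have hx := P.x_tendsto hX0 z ω h2 h3 h4
  obtain ⟨N, hN⟩ := Metric.tendsto_atTop.1 hx δ hδ0
  refine h1 (Set.mem_iUnion.2 ⟨N, ?_, hx⟩)
  intro j hj
  have := hN j hj
  rwa [Real.dist_eq] at this
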